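/- (Generalized Karlsson–Minton formula (1.2) of the paper.) Let a, b, d, c_1,...,c_r be complex numbers, m_1,...,m_r nonnegative integers with |m| = ∑ m_i, and Re(a + |m| + b - d) < 0; assume no denominators vanish. Then ∑_{k=0}^∞ (a)_k (b)_k ∏_{i=1}^r (c_i+m_i)_k / (k! (d)_k ∏_{i=1}^r (c_i)_k) = [Γ(d)Γ(d-a-b)/(Γ(d-a)Γ(d-b))] ∏_{i=1}^r (c_i+1-d)_{m_i}/(c_i)_{m_i} · (a)_{|m|}/(1+a+b-d)_{|m|} × ∑_{x_1=0}^{m_1}⋯∑_{x_r=0}^{m_r} [ ∏_{1≤i<j≤r} (c_i+x_i-c_j-x_j)/(c_i-c_j) · (b+1-d)_{|x|}/(1-|m|-a)_{|x|} · ∏_{i=1}^r (c_i-a)_{x_i}/(1+c_i-d)_{x_i} · ∏_{i,k=1}^r (c_i-c_k-m_k)_{x_i}/(1+c_i-c_k)_{x_i} ], where |x| = x_1+...+x_r. -/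

import Mathlib

open Finset

/-- Pochhammer symbol (rising factorial) `(x)_k`. -/
noncomputable def poch (x : ℂ) (k : ℕ) : ℂ := ∏ j ∈ Finset.range k, (x + j)

/-!
For nodes `u i`, `i ∈ T`, the series `∑ (a)_k (b)_k / (k! (d)_k) * ∏ i ∈ T, (u i + k)` is evaluated
by induction on `T`. Gauss's summation theorem is the case of no nodes, and
`(u + k) (a)_k = (u - a) (a)_k + a (a + 1)_k` removes a node at the cost of shifting `a`. The answer
is a sum over the splittings of `T` into two parts. It obeys the same recursion: expand the weights
of the splittings in partial fractions with respect to the new node; the residues at an old node `i`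
cancel between the splittings in which these two nodes lie in different parts.

The strings of nodes `c i, c i + 1, …, c i + m i - 1` produce the factors `(c i + m i)_k / (c i)_k`,
up to constants. For them the weight of a splitting vanishes unless its first part is a union of
initial segments, and the lengths `x i` of these segments are the indices of the multiple sum.
-/

open Filter Topology Asymptotics

section Pochhammer

lemma poch_zero (x : ℂ) : poch x 0 = 1 := by simp [poch]

lemma poch_succ (x : ℂ) (k : ℕ) : poch x (k + 1) = poch x k * (x + k) := by
  simp [poch, prod_range_succ]

lemma poch_add (x : ℂ) (m n : ℕ) : poch x (m + n) = poch x m * poch (x + m) n := by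
  simp [poch, prod_range_add, add_assoc]

lemma poch_succ_left (x : ℂ) (k : ℕ) : poch x (k + 1) = x * poch (x + 1) k := by
  rw [add_comm k 1, poch_add, poch_succ, poch_zero]
  simp

lemma poch_ne_zero {x : ℂ} {n : ℕ} (h : ∀ k < n, x + k ≠ 0) : poch x n ≠ 0 :=
  prod_ne_zero_iff.2 fun k hk => h k (mem_range.1 hk)

lemma poch_ne_zero_of_le {x : ℂ} {k n : ℕ} (hkn : k ≤ n) (h : poch x n ≠ 0) : poch x k ≠ 0 := by
  rw [← Nat.add_sub_cancel' hkn, poch_add] at h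
  exact left_ne_zero_of_mul h

lemma poch_reflect (x : ℂ) (n : ℕ) : poch x n = (-1) ^ n * poch (1 - x - n) n := by
  have h : (-1 : ℂ) ^ n = ∏ _j ∈ range n, (-1) := by simp
  rw [poch, poch, ← prod_range_reflect, h, ← prod_mul_distrib]
  refine prod_congr rfl fun j hj => ?_
  have := mem_range.1 hj
  rw [Nat.sub_sub, Nat.cast_sub (by omega)]
  push_cast
  ring

lemma poch_add_natCast_mul_poch (x : ℂ) (m k : ℕ) :
    poch (x + m) k * poch x m = poch (x + k) m * poch x k := by
  rw [mul_comm, ← poch_add, add_comm m k, poch_add, mul_comm]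

lemma poch_mul_poch_one_sub (x : ℂ) (n k : ℕ) :
    poch x n * poch (1 - (n + k : ℕ) - x) k = (-1) ^ k * poch x (n + k) := by
  rw [poch_reflect (1 - (n + k : ℕ) - x), poch_add, Nat.cast_add,
    show 1 - (1 - (n + k : ℂ) - x) - k = x + n by ring]
  ring

lemma prod_poch_add_div_prod_poch {ι : Type*} {s : Finset ι} {c : ι → ℂ} (m : ι → ℕ) (k : ℕ)
    (hc : ∀ i ∈ s, ∀ j : ℕ, c i + j ≠ 0) :
    (∏ i ∈ s, poch (c i + m i) k) / ∏ i ∈ s, poch (c i) k =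
      (∏ i ∈ s, poch (c i + k) (m i)) / ∏ i ∈ s, poch (c i) (m i) := by
  rw [← prod_div_distrib, ← prod_div_distrib]
  refine prod_congr rfl fun i hi => ?_
  rw [div_eq_div_iff (poch_ne_zero fun j _ => hc i hi j) (poch_ne_zero fun j _ => hc i hi j),
    poch_add_natCast_mul_poch]

lemma natCast_cpow_mul_factorial_ne_zero {n : ℕ} (hn : n ≠ 0) (x : ℂ) :
    (n : ℂ) ^ x * n.factorial ≠ 0 :=
  mul_ne_zero (by simp [Complex.cpow_eq_zero_iff, hn])
    (Nat.cast_ne_zero.2 n.factorial_ne_zero)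

lemma GammaSeq_eq_div_poch (x : ℂ) (n : ℕ) :
    Complex.GammaSeq x n = (n : ℂ) ^ x * n.factorial / poch x (n + 1) := rfl

lemma tendsto_inv_GammaSeq (x : ℂ) :
    Tendsto (fun n => (Complex.GammaSeq x n)⁻¹) atTop (𝓝 (Complex.Gamma x)⁻¹) := by
  by_cases hx : Complex.Gamma x = 0
  · obtain ⟨k, rfl⟩ := (Complex.Gamma_eq_zero_iff x).1 hx
    refine tendsto_const_nhds.congr' ?_
    filter_upwards [eventually_ge_atTop k] with n hn
    have hpoch : poch (-k) (n + 1) = 0 :=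
      prod_eq_zero (mem_range.2 (by omega : k < n + 1)) (neg_add_cancel _)
    rw [hx, GammaSeq_eq_div_poch, hpoch, div_zero]
  · exact (Complex.GammaSeq_tendsto_Gamma x).inv₀ hx

lemma tendsto_poch_mul_poch_div {u v x y : ℂ} (h : u + v = x + y) :
    Tendsto (fun n : ℕ => poch u (n + 1) * poch v (n + 1) / (poch x (n + 1) * poch y (n + 1)))
      atTop (𝓝 (Complex.Gamma x * Complex.Gamma y / (Complex.Gamma u * Complex.Gamma v))) := by
  have hlim := ((Complex.GammaSeq_tendsto_Gamma x).mul (Complex.GammaSeq_tendsto_Gamma y)).mul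
    ((tendsto_inv_GammaSeq u).mul (tendsto_inv_GammaSeq v))
  rw [← mul_inv, ← div_eq_mul_inv] at hlim
  refine hlim.congr' ?_
  filter_upwards [eventually_ne_atTop 0] with n hn
  have hpow : (n : ℂ) ^ u * n.factorial * ((n : ℂ) ^ v * n.factorial) =
      (n : ℂ) ^ x * n.factorial * ((n : ℂ) ^ y * n.factorial) := by
    have hn' : (n : ℂ) ≠ 0 := Nat.cast_ne_zero.2 hn
    rw [mul_mul_mul_comm, mul_mul_mul_comm (_ ^ x), ← Complex.cpow_add _ _ hn', h,
      Complex.cpow_add _ _ hn']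
  have hne := mul_ne_zero (natCast_cpow_mul_factorial_ne_zero hn x)
    (natCast_cpow_mul_factorial_ne_zero hn y)
  simp only [GammaSeq_eq_div_poch, inv_div, div_mul_div_comm, hpow]
  rw [mul_comm (poch x (n + 1) * _), mul_div_mul_left _ _ hne]

lemma poch_isBigO (a : ℂ) :
    (fun n : ℕ => poch a (n + 1)) =O[atTop] fun n : ℕ => (n : ℂ) ^ a * n.factorial := by
  refine isBigO_of_div_tendsto_nhds ?_ _ ((tendsto_inv_GammaSeq a).congr fun n => inv_div _ _)
  filter_upwards [eventually_ne_atTop 0] with n hn h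
  exact absurd h (natCast_cpow_mul_factorial_ne_zero hn a)

lemma inv_poch_isBigO (d : ℂ) :
    (fun n : ℕ => (poch d (n + 1))⁻¹) =O[atTop]
      fun n : ℕ => ((n : ℂ) ^ d * n.factorial)⁻¹ := by
  refine isBigO_of_div_tendsto_nhds ?_ _
    ((Complex.GammaSeq_tendsto_Gamma d).congr fun n => (inv_div_inv _ _).symm)
  filter_upwards [eventually_ne_atTop 0] with n hn h
  exact absurd h (inv_ne_zero (natCast_cpow_mul_factorial_ne_zero hn d))

end Pochhammer

section Gauss

/-- The `k`-th term of the hypergeometric series `₂F₁(a, b; d; 1)`. -/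
noncomputable def gaussTerm (a b d : ℂ) (k : ℕ) : ℂ :=
  poch a k * poch b k / ((k.factorial : ℂ) * poch d k)

/-- The value of the hypergeometric series `₂F₁(a, b; d; 1)` in Gauss's summation theorem. As `1/Γ`
vanishes at the poles of `Γ`, the value `0` which Lean gives to `x / 0` is the right one where
`d - a` or `d - b` is such a pole. -/
noncomputable def gaussValue (a b d : ℂ) : ℂ :=
  Complex.Gamma d * Complex.Gamma (d - a - b) / (Complex.Gamma (d - a) * Complex.Gamma (d - b))

variable {a b d : ℂ}

lemma gaussTerm_isBigO (a b d : ℂ) :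
    (fun n : ℕ => gaussTerm a b d (n + 1)) =O[atTop]
      fun n : ℕ => (n : ℝ) ^ ((a + b - d).re - 1) := by
  have hbigO := (((poch_isBigO a).mul (poch_isBigO b)).mul
    (isBigO_refl (fun n : ℕ => ((n + 1).factorial : ℂ)⁻¹) atTop)).mul (inv_poch_isBigO d)
  have hterm : ∀ n : ℕ, poch a (n + 1) * poch b (n + 1) * ((n + 1).factorial : ℂ)⁻¹ *
      (poch d (n + 1))⁻¹ = gaussTerm a b d (n + 1) := fun n => by
    rw [gaussTerm, div_eq_mul_inv, mul_inv, mul_assoc (_ * _)]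
  simp only [hterm] at hbigO
  refine hbigO.trans (IsBigO.of_bound 1 ?_)
  filter_upwards [eventually_gt_atTop 0] with n hn
  have hn' : (0 : ℝ) < n := Nat.cast_pos.2 hn
  have hpow : ∀ z : ℂ, ‖(n : ℂ) ^ z‖ = (n : ℝ) ^ z.re := fun z => by
    rw [← Complex.ofReal_natCast, Complex.norm_cpow_eq_rpow_re_of_pos hn']
  simp only [norm_mul, norm_inv, hpow, Complex.norm_natCast, Nat.factorial_succ, Nat.cast_mul]
  rw [Real.norm_of_nonneg (by positivity), Complex.sub_re, Complex.add_re,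
    Real.rpow_sub hn', Real.rpow_sub hn', Real.rpow_add hn', Real.rpow_one]
  have hcancel : (n : ℝ) ^ a.re * n.factorial * ((n : ℝ) ^ b.re * n.factorial) *
      (((n + 1 : ℕ) : ℝ) * n.factorial)⁻¹ * ((n : ℝ) ^ d.re * n.factorial)⁻¹ =
      (n : ℝ) ^ a.re * (n : ℝ) ^ b.re / (n : ℝ) ^ d.re / ((n + 1 : ℕ) : ℝ) := by
    field_simp
  rw [hcancel, one_mul]
  gcongr
  exact n.le_succ

lemma summable_gaussTerm (h : (a + b - d).re < 0) : Summable (gaussTerm a b d) :=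
  (summable_nat_add_iff 1).1 <| summable_of_isBigO_nat
    (Real.summable_nat_rpow.2 (by linarith)) (gaussTerm_isBigO a b d)

lemma tendsto_natCast_mul_gaussTerm (h : (a + b - d).re < 0) :
    Tendsto (fun k : ℕ => (k : ℂ) * gaussTerm a b d k) atTop (𝓝 0) := by
  rw [← tendsto_add_atTop_iff_nat 1]
  have hsucc : (fun n : ℕ => ((n + 1 : ℕ) : ℂ)) =O[atTop] fun n : ℕ => (n : ℝ) := by
    refine IsBigO.of_bound 2 ?_
    filter_upwards [eventually_ge_atTop 1] with n hn
    rw [Complex.norm_natCast, Real.norm_of_nonneg (by positivity)]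
    exact_mod_cast (by omega : n + 1 ≤ 2 * n)
  refine (hsucc.mul (gaussTerm_isBigO a b d)).trans_tendsto ?_
  have hlim : Tendsto (fun n : ℕ => (n : ℝ) ^ (-(-(a + b - d).re))) atTop (𝓝 0) :=
    (tendsto_rpow_neg_atTop (by linarith)).comp tendsto_natCast_atTop_atTop
  refine hlim.congr' ?_
  filter_upwards [eventually_gt_atTop 0] with n hn
  have hn' : (0 : ℝ) < n := Nat.cast_pos.2 hn
  rw [neg_neg, Real.rpow_sub hn', Real.rpow_one]
  field_simp

lemma gaussTerm_contiguous (hd : ∀ k : ℕ, d + k ≠ 0) (k : ℕ) :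
    (d - a) * (d - b) * gaussTerm a b (d + 1) k - d * (d - a - b) * gaussTerm a b d k =
      d * ((k + 1 : ℕ) * gaussTerm a b d (k + 1)) - d * (k * gaussTerm a b d k) := by
  have hd0 : d ≠ 0 := by simpa using hd 0
  have hdk := hd k
  have hp : poch d k ≠ 0 := poch_ne_zero fun j _ => hd j
  have hshift : poch (d + 1) k = poch d k * (d + k) / d := by
    rw [← poch_succ, poch_succ_left, mul_div_cancel_left₀ _ hd0]
  have hf : (k.factorial : ℂ) ≠ 0 := Nat.cast_ne_zero.2 k.factorial_ne_zero
  have hk : (k : ℂ) + 1 ≠ 0 := Nat.cast_add_one_ne_zero k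
  simp only [gaussTerm, poch_succ, hshift, Nat.factorial_succ]
  push_cast
  field_simp
  ring

lemma add_sub_add_natCast_re_neg (h : (a + b - d).re < 0) (n : ℕ) : (a + b - (d + n)).re < 0 := by
  simp only [Complex.sub_re, Complex.add_re, Complex.natCast_re] at h ⊢
  linarith [n.cast_nonneg (α := ℝ)]

lemma tsum_gaussTerm_succ (h : (a + b - d).re < 0) (hd : ∀ k : ℕ, d + k ≠ 0) :
    d * (d - a - b) * ∑' k, gaussTerm a b d k =
      (d - a) * (d - b) * ∑' k, gaussTerm a b (d + 1) k := by
  have h' : (a + b - (d + 1)).re < 0 := by simpa using add_sub_add_natCast_re_neg h 1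
  have hsum := (((summable_gaussTerm h').hasSum.mul_left ((d - a) * (d - b))).sub
    ((summable_gaussTerm h).hasSum.mul_left (d * (d - a - b)))).tendsto_sum_nat
  simp only [gaussTerm_contiguous hd,
    sum_range_sub (fun k : ℕ => d * ((k : ℂ) * gaussTerm a b d k))] at hsum
  have hzero := ((tendsto_natCast_mul_gaussTerm h).const_mul d).sub_const
    (d * ((0 : ℕ) * gaussTerm a b d 0))
  have heq := tendsto_nhds_unique hsum hzero
  simp only [Nat.cast_zero, zero_mul, mul_zero, sub_zero] at heq
  exact (sub_eq_zero.1 heq).symm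

lemma tsum_gaussTerm_add_natCast (h : (a + b - d).re < 0) (hd : ∀ k : ℕ, d + k ≠ 0) (n : ℕ) :
    poch d n * poch (d - a - b) n * ∑' k, gaussTerm a b d k =
      poch (d - a) n * poch (d - b) n * ∑' k, gaussTerm a b (d + n) k := by
  induction n with
  | zero => simp [poch_zero]
  | succ n ih =>
    have hsucc := tsum_gaussTerm_succ (add_sub_add_natCast_re_neg h n) fun k => by
      simpa [add_assoc] using hd (n + k)
    simp only [poch_succ]
    push_cast
    rw [← add_assoc]
    linear_combination ((d + n) * (d - a - b + n)) * ih
      + poch (d - a) n * poch (d - b) n * hsucc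

lemma tendsto_gaussTerm_add_natCast (a b d : ℂ) (k : ℕ) :
    Tendsto (fun n : ℕ => gaussTerm a b (d + n) k) atTop
      (𝓝 (poch a k * poch b k / k.factorial * 0 ^ k)) := by
  have hinv : ∀ j : ℕ, Tendsto (fun n : ℕ => (d + n + j)⁻¹) atTop (𝓝 0) := fun j => by
    have hcob : Tendsto (fun n : ℕ => d + j + (n : ℂ)) atTop (Bornology.cobounded ℂ) :=
      (tendsto_const_add_cobounded (d + j)).comp (tendsto_norm_atTop_iff_cobounded.1 <| by
        simpa using tendsto_natCast_atTop_atTop (R := ℝ))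
    refine (tendsto_inv₀_cobounded.comp hcob).congr fun n => ?_
    simp only [Function.comp, add_right_comm]
  have hprod := (tendsto_finsetProd (range k) fun j _ => hinv j).const_mul
    (poch a k * poch b k / k.factorial)
  simp only [prod_const, card_range] at hprod
  refine hprod.congr fun n => ?_
  rw [prod_inv_distrib, gaussTerm, ← div_eq_mul_inv, div_div, poch.eq_def (d + n)]

lemma norm_gaussTerm_le {x : ℝ} (hx : 0 < x) (hxd : x ≤ d.re) (a b : ℂ) (k : ℕ) :
    ‖gaussTerm a b d k‖ ≤ ‖gaussTerm a b x k‖ := by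
  have hfactor : ∀ j : ℕ, ‖(x : ℂ) + j‖ = x + j := fun j => by
    rw [← Complex.ofReal_natCast, ← Complex.ofReal_add, Complex.norm_real,
      Real.norm_of_nonneg (by positivity)]
  have hpoch : ‖poch x k‖ ≤ ‖poch d k‖ := by
    simp only [poch, norm_prod, hfactor]
    refine prod_le_prod (fun _ _ => by positivity) fun j _ => le_trans ?_ (Complex.re_le_norm _)
    simpa using hxd
  have hpos : 0 < ‖poch x k‖ := by
    simp only [poch, norm_prod, hfactor]
    exact prod_pos fun j _ => by positivity
  simp only [gaussTerm, norm_div, norm_mul, Complex.norm_natCast]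
  gcongr

lemma tendsto_tsum_gaussTerm (a b d : ℂ) :
    Tendsto (fun n : ℕ => ∑' k, gaussTerm a b (d + n) k) atTop (𝓝 1) := by
  obtain ⟨N, hN⟩ := exists_nat_gt (max (-d.re) (a + b - d).re)
  have hpos : 0 < d.re + N := by linarith [(le_max_left _ _).trans_lt hN]
  have hconv : (a + b - ((d.re + N : ℝ) : ℂ)).re < 0 := by
    have := (le_max_right _ _).trans_lt hN
    simp only [Complex.sub_re, Complex.add_re, Complex.ofReal_re] at this ⊢
    linarith
  have hlim : Tendsto (fun n : ℕ => ∑' k, gaussTerm a b (d + n) k) atTop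
      (𝓝 (∑' k, poch a k * poch b k / k.factorial * 0 ^ k)) := by
    refine tendsto_tsum_of_dominated_convergence (summable_gaussTerm hconv).norm
      (tendsto_gaussTerm_add_natCast a b d) ?_
    filter_upwards [eventually_ge_atTop N] with n hn k
    refine norm_gaussTerm_le hpos ?_ a b k
    simpa using hn
  rw [tsum_eq_single 0 fun k hk => by simp [hk]] at hlim
  simpa [poch_zero] using hlim

lemma one_add_sub_add_natCast_ne_zero {n k : ℕ} (h : (a + n + b - d).re < 0) (hk : k < n) :
    1 + a + b - d + k ≠ 0 := fun h0 => by
  have hre := congrArg Complex.re h0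
  have hkn : (k : ℝ) + 1 ≤ n := by exact_mod_cast hk
  simp only [Complex.sub_re, Complex.add_re, Complex.natCast_re, Complex.one_re,
    Complex.zero_re] at hre h
  linarith

theorem hasSum_gaussTerm (h : (a + b - d).re < 0) (hd : ∀ k : ℕ, d + k ≠ 0) :
    HasSum (gaussTerm a b d) (gaussValue a b d) := by
  have hdab : ∀ k : ℕ, d - a - b + k ≠ 0 := fun k hk => by
    have hre := congrArg Complex.re hk
    simp only [Complex.sub_re, Complex.add_re, Complex.natCast_re, Complex.zero_re] at hre h
    linarith [k.cast_nonneg (α := ℝ)]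
  have hlim := (tendsto_poch_mul_poch_div (by ring : d - a + (d - b) = d + (d - a - b))).mul
    ((tendsto_add_atTop_iff_nat 1).2 (tendsto_tsum_gaussTerm a b d))
  have hconst : ∀ n : ℕ, poch (d - a) (n + 1) * poch (d - b) (n + 1) /
      (poch d (n + 1) * poch (d - a - b) (n + 1)) * ∑' k, gaussTerm a b (d + (n + 1 : ℕ)) k =
      ∑' k, gaussTerm a b d k := fun n => by
    have hne := mul_ne_zero (poch_ne_zero (n := n + 1) fun j _ => hd j)
      (poch_ne_zero (n := n + 1) fun j _ => hdab j)
    rw [div_mul_eq_mul_div, ← tsum_gaussTerm_add_natCast h hd, mul_div_cancel_left₀ _ hne]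
  simp only [hconst, mul_one] at hlim
  rw [gaussValue, ← tendsto_nhds_unique tendsto_const_nhds hlim]
  exact (summable_gaussTerm h).hasSum

lemma gaussTerm_mul_add (a b d y : ℂ) (k : ℕ) :
    gaussTerm a b d k * (y + k) = (y - a) * gaussTerm a b d k + a * gaussTerm (a + 1) b d k := by
  have hshift : a * poch (a + 1) k = poch a k * (a + k) := by rw [← poch_succ_left, poch_succ]
  simp only [gaussTerm]
  linear_combination (-poch b k / (k.factorial * poch d k)) * hshift

lemma gaussValue_add_one_mul (h : 1 + a + b - d ≠ 0) :
    gaussValue (a + 1) b d * (1 + a + b - d) = gaussValue a b d * (1 + a - d) := by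
  have hGamma : Complex.Gamma (d - a - b) =
      (d - a - b - 1) * Complex.Gamma (d - (a + 1) - b) := by
    rw [show d - (a + 1) - b = d - a - b - 1 by ring,
      ← Complex.Gamma_add_one _ fun h0 => h (by linear_combination -h0), sub_add_cancel]
  have hinv := Complex.one_div_Gamma_eq_self_mul_one_div_Gamma_add_one (d - (a + 1))
  rw [show d - (a + 1) + 1 = d - a by ring] at hinv
  simp only [gaussValue, div_eq_mul_inv, mul_inv, hGamma, hinv]
  ring

lemma gaussValue_add_one_div_poch (h : 1 + a + b - d ≠ 0) (n : ℕ) :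
    gaussValue (a + 1) b d / poch (1 + (a + 1) + b - d) n =
      gaussValue a b d * (1 + a - d) / poch (1 + a + b - d) (n + 1) := by
  rw [poch_succ_left, ← gaussValue_add_one_mul h, mul_comm, mul_div_mul_left _ _ h]
  congr 2
  ring

end Gauss

section PartialFractions

variable {ι K : Type*} [DecidableEq ι] [Field K] {u : ι → K} {S : Finset ι} {v : K}

lemma prod_add_mul_div_sub (α τ : ι → K) (l μ : K) (hu : Set.InjOn u S) (hv : ∀ i ∈ S, v ≠ u i) :
    ∏ i ∈ S, (α i + τ i * (l + μ * v) / (v - u i)) =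
      ∏ i ∈ S, α i + (l + μ * v) * ∑ i ∈ S,
        τ i * (∏ j ∈ S.erase i, (α j + τ j * (l + μ * u i) / (u i - u j))) / (v - u i) := by
  induction S using Finset.induction_on generalizing v with
  | empty => simp
  | insert p S hp ih =>
    have hu' : Set.InjOn u S := hu.mono (by simp)
    have hpS : ∀ i ∈ S, u p ≠ u i := fun i hi h =>
      hp (hu (by simp) (by simp [hi]) h ▸ hi)
    have hvS : ∀ i ∈ S, v ≠ u i := fun i hi => hv i (mem_insert_of_mem hi)
    have hvp : v - u p ≠ 0 := sub_ne_zero.2 (hv p (mem_insert_self _ _))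
    have herase : ∀ i ∈ S,
        ∏ j ∈ (insert p S).erase i, (α j + τ j * (l + μ * u i) / (u i - u j)) =
          (α p + τ p * (l + μ * u i) / (u i - u p)) *
            ∏ j ∈ S.erase i, (α j + τ j * (l + μ * u i) / (u i - u j)) := fun i hi => by
      have hne : p ≠ i := fun h => hp (h ▸ hi)
      rw [erase_insert_of_ne hne, prod_insert fun h => hp (mem_of_mem_erase h)]
    rw [prod_insert hp, prod_insert hp, sum_insert hp, erase_insert hp, ih hu' hvS, ih hu' hpS]
    set F : ι → K := fun i => ∏ j ∈ S.erase i, (α j + τ j * (l + μ * u i) / (u i - u j))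
    have hsum : ∑ i ∈ S, τ i * (∏ j ∈ (insert p S).erase i,
          (α j + τ j * (l + μ * u i) / (u i - u j))) / (v - u i) =
        (α p + τ p * (l + μ * v) / (v - u p)) * ∑ i ∈ S, τ i * F i / (v - u i)
        - τ p * (l + μ * u p) / (v - u p) * ∑ i ∈ S, τ i * F i / (u p - u i) := by
      rw [mul_sum, mul_sum, ← sum_sub_distrib]
      refine sum_congr rfl fun i hi => ?_
      have h1 : v - u i ≠ 0 := sub_ne_zero.2 (hvS i hi)
      have h2 : u p - u i ≠ 0 := sub_ne_zero.2 (hpS i hi)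
      rw [herase i hi, ← neg_sub (u p)]
      simp only [F]
      field_simp
      ring
    rw [hsum]
    ring

lemma prod_one_add_one_div_sub (hu : Set.InjOn u S) (hv : ∀ i ∈ S, v ≠ u i) :
    ∏ i ∈ S, (1 + 1 / (v - u i)) =
      1 + ∑ i ∈ S, (∏ j ∈ S.erase i, (1 + 1 / (u i - u j))) / (v - u i) := by
  simpa using prod_add_mul_div_sub (fun _ => 1) (fun _ => 1) 1 0 hu hv

lemma prod_one_add_one_div_mul_sub (a : K) (hu : Set.InjOn u S) (hv : ∀ i ∈ S, v ≠ u i) :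
    ∏ i ∈ S, (1 + 1 / (v - u i)) * (u i - a) = ∏ i ∈ S, (u i - a) +
      ∑ i ∈ S, (u i - a) * (∏ j ∈ S.erase i, (1 + 1 / (u i - u j)) * (u j - a)) / (v - u i) := by
  simpa only [zero_mul, add_zero, mul_one, one_mul, add_mul, one_div_mul_eq_div] using
    prod_add_mul_div_sub (fun i => u i - a) (fun i => u i - a) 1 0 hu hv

lemma prod_one_add_one_div_mul_sub_eq_prod_sub_add_one (a : K) (hu : Set.InjOn u S)
    (hv : ∀ i ∈ S, v ≠ u i) :
    ∏ i ∈ S, (1 + 1 / (v - u i)) * (u i - a) = ∏ i ∈ S, (u i - (a + 1)) + (v - a) *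
      ∑ i ∈ S, (∏ j ∈ S.erase i, (1 + 1 / (u i - u j)) * (u j - a)) / (v - u i) := by
  have hsplit : ∀ {x y : K}, x ≠ y →
      (1 + 1 / (x - y)) * (y - a) = y - (a + 1) + 1 * (-a + 1 * x) / (x - y) := fun {x y} hxy => by
    have := sub_ne_zero.2 hxy
    field_simp
    ring
  have hsplit_erase : ∀ i ∈ S, ∏ j ∈ S.erase i, (1 + 1 / (u i - u j)) * (u j - a) =
      ∏ j ∈ S.erase i, (u j - (a + 1) + 1 * (-a + 1 * u i) / (u i - u j)) := fun i hi =>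
    prod_congr rfl fun j hj => hsplit fun hij =>
      (mem_erase.1 hj).1 (hu hi (mem_of_mem_erase hj) hij).symm
  rw [prod_congr rfl fun i hi => hsplit (hv i hi),
    prod_add_mul_div_sub (fun i => u i - (a + 1)) (fun _ => 1) (-a) 1 hu hv,
    sum_congr rfl fun i hi => by rw [← hsplit_erase i hi, one_mul]]
  ring

lemma sub_mul_prod_one_add_one_div_mul_sub (a w : K) (hu : Set.InjOn u S)
    (hv : ∀ i ∈ S, v ≠ u i) :
    (v - w) * ∏ i ∈ S, (1 + 1 / (v - u i)) * (u i - a) =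
      (a - w) * ∏ i ∈ S, (u i - (a + 1)) + (v - a) * (∏ i ∈ S, (u i - a) +
        ∑ i ∈ S, (u i - w) * (∏ j ∈ S.erase i, (1 + 1 / (u i - u j)) * (u j - a)) /
          (v - u i)) := by
  have hsum : ∑ i ∈ S, (u i - w) * (∏ j ∈ S.erase i, (1 + 1 / (u i - u j)) * (u j - a)) /
        (v - u i) =
      (a - w) * ∑ i ∈ S, (∏ j ∈ S.erase i, (1 + 1 / (u i - u j)) * (u j - a)) / (v - u i) +
      ∑ i ∈ S, (u i - a) * (∏ j ∈ S.erase i, (1 + 1 / (u i - u j)) * (u j - a)) /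
        (v - u i) := by
    rw [mul_sum, ← sum_add_distrib]
    exact sum_congr rfl fun i _ => by ring
  rw [hsum]
  linear_combination (a - w) * prod_one_add_one_div_mul_sub_eq_prod_sub_add_one a hu hv
    + (v - a) * prod_one_add_one_div_mul_sub a hu hv

end PartialFractions

lemma prod_Ico_one_add_one_div_sub {K : Type*} [Field K] (y : K) {p q : ℕ} (hpq : p ≤ q)
    (h : ∀ l, p ≤ l → l ≤ q → (l : K) - y ≠ 0) :
    ∏ l ∈ Ico p q, (1 + 1 / ((l : K) - y)) = (q - y) / (p - y) := by
  induction q, hpq using Nat.le_induction with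
  | base => simp [div_self (h p le_rfl le_rfl)]
  | succ n hn ih =>
    rw [prod_Ico_succ_top hn, ih fun l h1 h2 => h l h1 (by omega)]
    have hp := h p le_rfl (by omega)
    have hq := h n hn (by omega)
    push_cast
    field_simp
    ring

lemma sum_powerset_sum_erase_eq {ι M : Type*} [DecidableEq ι] [AddCommMonoid M] (T : Finset ι)
    (G : Finset ι → Finset ι → ι → M) :
    ∑ S ∈ T.powerset, ∑ i ∈ S, G (S.erase i) (T \ S) i =
      ∑ S ∈ T.powerset, ∑ i ∈ T \ S, G S ((T \ S).erase i) i := by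
  rw [sum_sigma', sum_sigma']
  refine sum_bij' (fun p _ => ⟨p.1.erase p.2, p.2⟩) (fun p _ => ⟨insert p.2 p.1, p.2⟩)
    ?_ ?_ ?_ ?_ ?_
  · simp only [mem_sigma, mem_powerset, Finset.mem_sdiff]
    exact fun p hp => ⟨(erase_subset _ _).trans hp.1, hp.1 hp.2, notMem_erase _ _⟩
  · simp only [mem_sigma, mem_powerset, Finset.mem_sdiff]
    exact fun p hp => ⟨insert_subset hp.2.1 hp.1, mem_insert_self _ _⟩
  · simp only [mem_sigma]
    exact fun p hp => by rw [insert_erase hp.2]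
  · simp only [mem_sigma, Finset.mem_sdiff]
    exact fun p hp => by rw [erase_insert hp.2.2]
  · simp only [mem_sigma, mem_powerset]
    intro p hp
    congr 1
    ext j
    simp only [Finset.mem_sdiff, mem_erase]
    grind

section NodeSum

variable {ι : Type*} [DecidableEq ι] (u : ι → ℂ) (a b d : ℂ)

/-- The weight of the splitting of a set of nodes into `S` and its complement `C`: its sum over all
splittings evaluates the hypergeometric series with the numerator factors `u i + k`. -/
noncomputable def splitWeight (S C : Finset ι) : ℂ :=
  (∏ i ∈ S, ∏ k ∈ C, (1 + 1 / (u k - u i))) * (∏ i ∈ S, (u i - a)) *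
    (∏ k ∈ C, (1 + u k - d)) * (poch a #C * poch (b + 1 - d) #S)

/-- The sum of `splitWeight` over all splittings of the set of nodes `T`. -/
noncomputable def nodeSum (T : Finset ι) : ℂ :=
  ∑ S ∈ T.powerset, splitWeight u a b d S (T \ S)

/-- The polar part at `u i`, as a function of `u v`, of the weight of a splitting into `S` and `C`
with two further nodes `i` and `v`, divided by `u v - a`. It is the same, up to sign, with `i` in the
first part and `v` in the second one, and the other way round. -/
noncomputable def splitResidue (v : ι) (S C : Finset ι) (i : ι) : ℂ :=
  (∏ j ∈ S, ∏ k ∈ C, (1 + 1 / (u k - u j))) * (∏ j ∈ S, (u j - a)) * (∏ k ∈ C, (1 + u k - d)) *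
    (∏ j ∈ S, (1 + 1 / (u i - u j))) * (∏ k ∈ C, (1 + 1 / (u k - u i))) * (1 + u i - d) *
    (poch a (#C + 1) * poch (b + 1 - d) (#S + 1)) / (u v - u i)

variable {u} {S C T : Finset ι} {v : ι}

lemma splitWeight_insert_right (hu : Set.InjOn u S) (hvS : ∀ i ∈ S, u v ≠ u i) (hvC : v ∉ C) :
    splitWeight u a b d S (insert v C) =
      (u v - a) * (a + #C) * splitWeight u a b d S C +
      a * (1 + a - d) * splitWeight u (a + 1) b d S C +
      (u v - a) * ∑ i ∈ S, splitResidue u a b d v (S.erase i) C i := by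
  have hres : ∑ i ∈ S, splitResidue u a b d v (S.erase i) C i =
      (∏ i ∈ S, ∏ k ∈ C, (1 + 1 / (u k - u i))) * (∏ k ∈ C, (1 + u k - d)) *
        (poch a (#C + 1) * poch (b + 1 - d) #S) *
        ∑ i ∈ S, (u i - (d - 1)) *
          (∏ j ∈ S.erase i, (1 + 1 / (u i - u j)) * (u j - a)) / (u v - u i) := by
    rw [mul_sum]
    refine sum_congr rfl fun i hi => ?_
    rw [splitResidue, card_erase_add_one hi, prod_mul_distrib,
      ← mul_prod_erase S (fun j => ∏ k ∈ C, (1 + 1 / (u k - u j))) hi]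
    ring
  have key := sub_mul_prod_one_add_one_div_mul_sub a (d - 1) hu hvS
  rw [hres]
  simp only [splitWeight, prod_insert hvC, prod_mul_distrib, card_insert_of_notMem hvC] at key ⊢
  have hpoch : poch a (#C + 1) = poch a #C * (a + #C) := poch_succ _ _
  have hpoch' : poch a (#C + 1) = a * poch (a + 1) #C := poch_succ_left _ _
  linear_combination
    (∏ i ∈ S, ∏ k ∈ C, (1 + 1 / (u k - u i))) * (∏ k ∈ C, (1 + u k - d)) *
      poch (b + 1 - d) #S * (poch a (#C + 1) * key +
        (u v - a) * (∏ i ∈ S, (u i - a)) * hpoch +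
        (1 + a - d) * (∏ i ∈ S, (u i - (a + 1))) * hpoch')

lemma splitWeight_insert_left (hu : Set.InjOn u C) (hvC : ∀ k ∈ C, u v ≠ u k) (hvS : v ∉ S) :
    splitWeight u a b d (insert v S) C =
      (u v - a) * (b + 1 - d + #S) * splitWeight u a b d S C -
      (u v - a) * ∑ k ∈ C, splitResidue u a b d v S (C.erase k) k := by
  have hres : ∑ k ∈ C, splitResidue u a b d v S (C.erase k) k =
      -((∏ i ∈ S, ∏ k ∈ C, (1 + 1 / (u k - u i))) * (∏ i ∈ S, (u i - a)) *
        (∏ k ∈ C, (1 + u k - d)) * (poch a #C * poch (b + 1 - d) (#S + 1)) *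
        ∑ k ∈ C, (∏ j ∈ C.erase k, (1 + 1 / (-u k - -u j))) / (-u v - -u k)) := by
    rw [mul_sum, ← sum_neg_distrib]
    refine sum_congr rfl fun k hk => ?_
    rw [splitResidue, card_erase_add_one hk, ← mul_prod_erase C (fun k => 1 + u k - d) hk,
      prod_congr rfl fun i _ => (mul_prod_erase C (fun k => 1 + 1 / (u k - u i)) hk).symm]
    simp only [prod_mul_distrib, neg_sub_neg]
    rw [← neg_sub (u v), div_neg]
    ring
  have key := prod_one_add_one_div_sub (u := fun k => -u k) (v := -u v)
    (fun k hk j hj h => hu hk hj (neg_injective h)) fun k hk h => hvC k hk (neg_injective h)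
  rw [hres]
  simp only [splitWeight, prod_insert hvS, card_insert_of_notMem hvS, poch_succ]
  rw [prod_congr rfl fun k _ => by rw [← neg_sub_neg (u v)], key]
  ring

lemma nodeSum_insert (hvT : v ∉ T) (hu : Set.InjOn u (insert v T : Finset ι)) :
    nodeSum u a b d (insert v T) =
      (u v - a) * (1 + a + b - d + #T) * nodeSum u a b d T +
      a * (1 + a - d) * nodeSum u (a + 1) b d T := by
  have huT : Set.InjOn u T := hu.mono (by simp)
  have hv : ∀ i ∈ T, u v ≠ u i := fun i hi h => hvT (hu (by simp) (by simp [hi]) h ▸ hi)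
  have hsplit : ∀ S ∈ T.powerset,
      splitWeight u a b d S (insert v T \ S) +
        splitWeight u a b d (insert v S) (insert v T \ insert v S) =
      (u v - a) * (1 + a + b - d + #T) * splitWeight u a b d S (T \ S) +
        a * (1 + a - d) * splitWeight u (a + 1) b d S (T \ S) +
        ((u v - a) * ∑ i ∈ S, splitResidue u a b d v (S.erase i) (T \ S) i -
          (u v - a) * ∑ k ∈ T \ S, splitResidue u a b d v S ((T \ S).erase k) k) := by
    intro S hS
    have hST := mem_powerset.1 hS
    have hvS : v ∉ S := fun h => hvT (hST h)
    have hcard : (#T : ℂ) = #(T \ S) + #S := by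
      exact_mod_cast (card_sdiff_add_card_eq_card hST).symm
    rw [insert_sdiff_of_notMem _ hvS, insert_sdiff_insert, sdiff_insert_of_notMem hvT,
      splitWeight_insert_right a b d (huT.mono hST) (fun i hi => hv i (hST hi))
        fun h => hvT (sdiff_subset h),
      splitWeight_insert_left a b d (huT.mono sdiff_subset) (fun i hi => hv i (sdiff_subset hi))
        hvS,
      hcard]
    ring
  rw [nodeSum, sum_powerset_insert hvT, ← sum_add_distrib, sum_congr rfl hsplit]
  simp only [sum_add_distrib, sum_sub_distrib, ← mul_sum]
  rw [sum_powerset_sum_erase_eq T (splitResidue u a b d v), sub_self, add_zero]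
  rfl

variable {a b d}

theorem hasSum_gaussTerm_mul_prod (hd : ∀ k : ℕ, d + k ≠ 0) (hu : Set.InjOn u T)
    (h : (a + #T + b - d).re < 0) :
    HasSum (fun k => gaussTerm a b d k * ∏ i ∈ T, (u i + k))
      (gaussValue a b d / poch (1 + a + b - d) #T * nodeSum u a b d T) := by
  induction T using Finset.induction_on generalizing a with
  | empty =>
    simpa [nodeSum, splitWeight, poch_zero] using hasSum_gaussTerm (by simpa using h) hd
  | insert v T hv ih =>
    have hcard := card_insert_of_notMem hv
    rw [hcard] at h
    have hB : ∀ k < #T + 1, 1 + a + b - d + k ≠ 0 := fun k => one_add_sub_add_natCast_ne_zero h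
    have hsum := ih (a := a) (hu.mono (by simp)) (by
      simp only [Nat.cast_succ, Complex.sub_re, Complex.add_re, Complex.one_re] at h ⊢
      linarith)
    have hsum' := ih (a := a + 1) (hu.mono (by simp)) (by
      rwa [Nat.cast_succ, add_comm (#T : ℂ), ← add_assoc] at h)
    have hterm : ∀ k, gaussTerm a b d k * ∏ i ∈ insert v T, (u i + k) =
        (u v - a) * (gaussTerm a b d k * ∏ i ∈ T, (u i + k)) +
          a * (gaussTerm (a + 1) b d k * ∏ i ∈ T, (u i + k)) := fun k => by
      rw [prod_insert hv, ← mul_assoc, gaussTerm_mul_add]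
      ring
    have hvalue : gaussValue a b d / poch (1 + a + b - d) #(insert v T) *
          nodeSum u a b d (insert v T) =
        (u v - a) * (gaussValue a b d / poch (1 + a + b - d) #T * nodeSum u a b d T) +
          a * (gaussValue (a + 1) b d / poch (1 + (a + 1) + b - d) #T *
            nodeSum u (a + 1) b d T) := by
      have hpoch : poch (1 + a + b - d) #T ≠ 0 := poch_ne_zero fun k hk => hB k (by omega)
      have hlast := hB #T (by omega)
      rw [gaussValue_add_one_div_poch (by simpa using hB 0 (by omega)), hcard, poch_succ,
        nodeSum_insert a b d hv hu]
      field_simp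
    simp only [hterm, hvalue]
    exact (hsum.mul_left _).add (hsum'.mul_left _)

end NodeSum

section Strings

variable {ι : Type*} {c : ι → ℂ} {m x : ι → ℕ}

/-- The nodes `c i, c i + 1, c i + 2, …`, indexed by the pairs `⟨i, j⟩`. -/
noncomputable def stringNode (c : ι → ℂ) (p : Σ _ : ι, ℕ) : ℂ := c p.1 + p.2

lemma stringNode_ne (hcc : ∀ i k, i ≠ k → c i ≠ c k)
    (hcck : ∀ i k, poch (1 + c i - c k) (m i) ≠ 0) {i k : ι} {j l : ℕ} (hj : j < m i)
    (hl : l ≤ m k) (hne : i = k → j ≠ l) : stringNode c ⟨i, j⟩ ≠ stringNode c ⟨k, l⟩ := by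
  intro h
  simp only [stringNode] at h
  by_cases hik : i = k
  · subst hik
    exact hne rfl (by simpa using h)
  rcases lt_trichotomy j l with hlt | rfl | hlt
  · obtain ⟨n, rfl⟩ := Nat.exists_eq_add_of_lt hlt
    refine prod_ne_zero_iff.1 (hcck k i) n (mem_range.2 (by omega)) ?_
    push_cast at h
    linear_combination -h
  · exact hcc i k hik (by linear_combination h)
  · obtain ⟨n, rfl⟩ := Nat.exists_eq_add_of_lt hlt
    refine prod_ne_zero_iff.1 (hcck i k) n (mem_range.2 (by omega)) ?_
    push_cast at h
    linear_combination h

variable [Fintype ι]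

/-- The union of the strings `{⟨i, 0⟩, …, ⟨i, m i - 1⟩}`; on the corresponding nodes the linear
factors `stringNode c p + k` multiply to the product of the `poch (c i + k) (m i)`. -/
def strings (m : ι → ℕ) : Finset (Σ _ : ι, ℕ) := univ.sigma fun i => range (m i)

lemma mem_strings {i : ι} {j : ℕ} : ⟨i, j⟩ ∈ strings m ↔ j < m i := by simp [strings]

lemma card_strings (m : ι → ℕ) : #(strings m) = ∑ i, m i := by simp [strings]

lemma injOn_stringNode (hcc : ∀ i k, i ≠ k → c i ≠ c k)
    (hcck : ∀ i k, poch (1 + c i - c k) (m i) ≠ 0) :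
    Set.InjOn (stringNode c) (strings m : Finset (Σ _ : ι, ℕ)) := by
  rintro ⟨i, j⟩ hij ⟨k, l⟩ hkl h
  by_contra hne
  refine stringNode_ne hcc hcck (mem_strings.1 hij) (mem_strings.1 hkl).le ?_ h
  rintro rfl rfl
  exact hne rfl

lemma strings_injective : Function.Injective (strings (ι := ι)) := fun x y h => by
  funext i
  refine eq_of_forall_lt_iff fun j => ?_
  rw [← mem_strings, ← mem_strings, h]

lemma prod_strings_add (c : ι → ℂ) (m : ι → ℕ) (y : ℂ) :
    ∏ p ∈ strings m, (stringNode c p + y) = ∏ i, poch (c i + y) (m i) := by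
  simp only [strings, prod_sigma, stringNode, poch, add_right_comm]

variable [DecidableEq ι]

lemma strings_sdiff_strings (m x : ι → ℕ) :
    strings m \ strings x = univ.sigma fun i => Ico (x i) (m i) := by
  ext ⟨i, j⟩
  simp only [Finset.mem_sdiff, mem_strings, mem_sigma, mem_univ, true_and, mem_Ico]
  omega

-- If `⟨i, j + 1⟩ ∈ S` but `⟨i, j⟩ ∉ S`, then the weight has the factor `1 + 1 / (-1)`.
lemma exists_eq_strings_of_splitWeight_ne_zero {a b d : ℂ} {S : Finset (Σ _ : ι, ℕ)}
    (hS : S ⊆ strings m) (hw : splitWeight (stringNode c) a b d S (strings m \ S) ≠ 0) :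
    ∃ x ≤ m, S = strings x := by
  have hdown : ∀ i j, (⟨i, j + 1⟩ : Σ _ : ι, ℕ) ∈ S → (⟨i, j⟩ : Σ _ : ι, ℕ) ∈ S := by
    intro i j hj
    by_contra hj'
    have hjC : (⟨i, j⟩ : Σ _ : ι, ℕ) ∈ strings m \ S :=
      Finset.mem_sdiff.2 ⟨mem_strings.2 ((Nat.lt_succ_self j).trans (mem_strings.1 (hS hj))), hj'⟩
    have hzero : 1 + 1 / (stringNode c ⟨i, j⟩ - stringNode c ⟨i, j + 1⟩) = 0 := by
      simp [stringNode]
    refine hw ?_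
    rw [splitWeight, prod_eq_zero hj (prod_eq_zero hjC hzero), zero_mul, zero_mul, zero_mul]
  have hex : ∀ i, ∃ j, (⟨i, j⟩ : Σ _ : ι, ℕ) ∉ S := fun i =>
    ⟨m i, fun h => lt_irrefl _ (mem_strings.1 (hS h))⟩
  refine ⟨fun i => Nat.find (hex i), fun i => Nat.find_min' _ fun h =>
    lt_irrefl _ (mem_strings.1 (hS h)), ?_⟩
  ext ⟨i, j⟩
  simp only [mem_strings, Nat.lt_find_iff, not_not]
  exact ⟨fun h n hn => Nat.decreasingInduction' (P := fun n => (⟨i, n⟩ : Σ _ : ι, ℕ) ∈ S)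
    (fun k _ _ hk => hdown i k hk) hn h, fun h => h j le_rfl⟩

lemma nodeSum_strings (c : ι → ℂ) (m : ι → ℕ) (a b d : ℂ) :
    nodeSum (stringNode c) a b d (strings m) =
      ∑ x ∈ Fintype.piFinset fun i => range (m i + 1),
        splitWeight (stringNode c) a b d (strings x) (strings m \ strings x) := by
  have hmem : ∀ x : ι → ℕ, x ∈ Fintype.piFinset (fun i => range (m i + 1)) ↔ x ≤ m := fun x => by
    simp [Pi.le_def]
  refine (sum_of_injOn strings strings_injective.injOn ?_ ?_ fun x _ => rfl).symm
  · intro x hx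
    exact mem_coe.2 <| mem_powerset.2 <| sigma_mono subset_rfl fun i =>
      range_mono ((hmem x).1 (mem_coe.1 hx) i)
  · intro S hS hSx
    by_contra hw
    obtain ⟨x, hx, rfl⟩ := exists_eq_strings_of_splitWeight_ne_zero (mem_powerset.1 hS) hw
    exact hSx ⟨x, mem_coe.2 ((hmem x).2 hx), rfl⟩

lemma prod_strings_prod_sdiff (hcc : ∀ i k, i ≠ k → c i ≠ c k)
    (hcck : ∀ i k, poch (1 + c i - c k) (m i) ≠ 0) (hx : x ≤ m) :
    ∏ p ∈ strings x, ∏ q ∈ strings m \ strings x, (1 + 1 / (stringNode c q - stringNode c p)) =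
      ∏ i, ∏ k, poch (c i - c k - m k) (x i) / poch (c i - c k - x k) (x i) := by
  rw [strings_sdiff_strings, strings]
  simp only [prod_sigma]
  refine prod_congr rfl fun i _ => ?_
  rw [Finset.prod_comm]
  refine prod_congr rfl fun k _ => ?_
  rw [poch, poch, ← prod_div_distrib]
  refine prod_congr rfl fun j hj => ?_
  have hji : j < x i := mem_range.1 hj
  have hy : ∀ l : ℕ, stringNode c ⟨k, l⟩ - stringNode c ⟨i, j⟩ = l - (c i - c k + j) := fun l => by
    simp only [stringNode]
    ring
  simp only [hy]
  rw [prod_Ico_one_add_one_div_sub _ (hx k), ← neg_div_neg_eq]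
  · congr 1 <;> ring
  · intro l hl hlm
    rw [← hy, sub_ne_zero]
    refine (stringNode_ne hcc hcck (hji.trans_le (hx i)) hlm ?_).symm
    rintro rfl
    omega

lemma prod_strings_sdiff_one_add_sub {d : ℂ} (hcd : ∀ i, poch (1 + c i - d) (m i) ≠ 0)
    (hx : x ≤ m) :
    ∏ p ∈ strings m \ strings x, (1 + stringNode c p - d) =
      (∏ i, poch (1 + c i - d) (m i)) / ∏ i, poch (1 + c i - d) (x i) := by
  rw [strings_sdiff_strings, prod_sigma, ← prod_div_distrib]
  refine prod_congr rfl fun i _ => ?_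
  rw [eq_div_iff (poch_ne_zero_of_le (hx i) (hcd i)), mul_comm, poch, poch,
    ← prod_range_mul_prod_Ico _ (hx i)]
  congr 1
  exact prod_congr rfl fun j _ => by rw [stringNode]; ring

end Strings

section Vandermonde

lemma mul_poch_mul_poch (δ : ℂ) (p q : ℕ) :
    δ * (poch (1 + δ) p * poch (1 - δ) q) =
      (δ + p - q) * (poch (δ - q) p * poch (-δ - p) q) := by
  have hl : δ * (poch (1 + δ) p * poch (1 - δ) q) = (-1) ^ q * poch (δ - q) (q + (p + 1)) := by
    rw [poch_reflect (1 - δ) q, poch_add, poch_succ_left,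
      show 1 - (1 - δ) - (q : ℂ) = δ - q by ring, sub_add_cancel, add_comm δ 1]
    ring
  have hr : (δ + p - q) * (poch (δ - q) p * poch (-δ - p) q) =
      (-1) ^ q * poch (δ - q) (p + (q + 1)) := by
    rw [poch_reflect (-δ - p) q, poch_add, poch_succ_left,
      show 1 - (-δ - (p : ℂ)) - q = δ - q + p + 1 by ring]
    ring
  rw [hl, hr, add_left_comm]

variable {ι : Type*} [Fintype ι] [LinearOrder ι] [LocallyFiniteOrderTop ι]
  [LocallyFiniteOrderBot ι] {c : ι → ℂ} {x : ι → ℕ}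

lemma prod_prod_poch_div_poch_eq_vandermonde (hcc : ∀ i k, i ≠ k → c i ≠ c k)
    (hcx : ∀ i k, poch (c i - c k - x k) (x i) ≠ 0) :
    ∏ i, ∏ k, poch (1 + c i - c k) (x i) / poch (c i - c k - x k) (x i) =
      (-1) ^ (∑ i, x i) * ∏ i, ∏ j ∈ Ioi i, (c i + x i - c j - x j) / (c i - c j) := by
  set f : ι → ι → ℂ := fun k i =>
    poch (1 + c i - c k) (x i) / poch (c i - c k - x k) (x i)
  have hdiag : ∀ i, f i i = (-1) ^ x i := fun i => by
    have hreflect := poch_reflect (1 + c i - c i) (x i)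
    rw [show 1 - (1 + c i - c i) - (x i : ℂ) = c i - c i - x i by ring] at hreflect
    simp only [f]
    rw [hreflect, mul_div_cancel_right₀ _ (hcx i i)]
  have hsplit : ∏ i, ∏ k, f k i = (∏ i, f i i) * ∏ i, ∏ k ∈ {i}ᶜ, f k i := by
    rw [← prod_mul_distrib]
    refine prod_congr rfl fun i _ => ?_
    rw [compl_singleton, mul_prod_erase univ (fun k => f k i) (mem_univ i)]
  have hpair : ∀ i k, i ≠ k → f k i * f i k = (c i + x i - c k - x k) / (c i - c k) := by
    intro i k hik
    have h := mul_poch_mul_poch (c i - c k) (x i) (x k)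
    have h0 := sub_ne_zero.2 (hcc i k hik)
    have h1 := hcx i k
    have h2 := hcx k i
    rw [show -(c i - c k) - (x i : ℂ) = c k - c i - x i by ring,
      show 1 - (c i - c k) = 1 + c k - c i by ring, ← add_sub_assoc] at h
    simp only [f]
    field_simp
    linear_combination h
  rw [hsplit, ← prod_prod_Ioi_mul_eq_prod_prod_off_diag, prod_congr rfl fun i _ => hdiag i,
    prod_pow_eq_pow_sum]
  congr 1
  refine prod_congr rfl fun i _ => prod_congr rfl fun k hk => ?_
  exact hpair i k (mem_Ioi.1 hk).ne

end Vandermonde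

section KarlssonMinton

variable {ι : Type*} [Fintype ι] [LinearOrder ι] [LocallyFiniteOrderTop ι]
  {a b d : ℂ} {c : ι → ℂ} {m x : ι → ℕ}

variable (a b d c m x) in
/-- The summand at `x` of the multiple sum in the generalized Karlsson–Minton formula. -/
noncomputable def kmTerm : ℂ :=
  (∏ i, ∏ j ∈ Ioi i, (c i + x i - c j - x j) / (c i - c j)) *
    (poch (b + 1 - d) (∑ i, x i) / poch (1 - (∑ i, m i : ℕ) - a) (∑ i, x i)) *
    (∏ i, poch (c i - a) (x i) / poch (1 + c i - d) (x i)) *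
    ∏ i, ∏ k, poch (c i - c k - m k) (x i) / poch (1 + c i - c k) (x i)

variable [LocallyFiniteOrderBot ι]

lemma prod_strings_prod_sdiff_eq_vandermonde (hcc : ∀ i k, i ≠ k → c i ≠ c k)
    (hcck : ∀ i k, poch (1 + c i - c k) (m i) ≠ 0) (hx : x ≤ m) :
    ∏ p ∈ strings x, ∏ q ∈ strings m \ strings x, (1 + 1 / (stringNode c q - stringNode c p)) =
      (∏ i, ∏ k, poch (c i - c k - m k) (x i) / poch (1 + c i - c k) (x i)) *
        ((-1) ^ (∑ i, x i) * ∏ i, ∏ j ∈ Ioi i, (c i + x i - c j - x j) / (c i - c j)) := by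
  have hcx : ∀ i k, poch (c i - c k - x k) (x i) ≠ 0 := fun i k => poch_ne_zero fun j hj => by
    have hne := stringNode_ne hcc hcck (hj.trans_le (hx i)) (hx k) (by rintro rfl; exact hj.ne)
    rw [stringNode, stringNode, ← sub_ne_zero] at hne
    convert hne using 1
    ring
  rw [prod_strings_prod_sdiff hcc hcck hx, ← prod_prod_poch_div_poch_eq_vandermonde hcc hcx,
    ← prod_mul_distrib]
  refine prod_congr rfl fun i _ => ?_
  rw [← prod_mul_distrib]
  exact prod_congr rfl fun k _ => by
    rw [div_mul_div_cancel₀ (poch_ne_zero_of_le (hx i) (hcck i k))]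

lemma splitWeight_strings (hcc : ∀ i k, i ≠ k → c i ≠ c k)
    (hma : poch (1 - (∑ i, m i : ℕ) - a) (∑ i, m i) ≠ 0)
    (hcd : ∀ i, poch (1 + c i - d) (m i) ≠ 0)
    (hcck : ∀ i k, poch (1 + c i - c k) (m i) ≠ 0) (hx : x ≤ m) :
    splitWeight (stringNode c) a b d (strings x) (strings m \ strings x) =
      (∏ i, poch (1 + c i - d) (m i)) * poch a (∑ i, m i) * kmTerm a b d c m x := by
  have hsum : #(strings m \ strings x) + ∑ i, x i = ∑ i, m i := by
    rw [← card_strings, ← card_strings]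
    exact card_sdiff_add_card_eq_card (sigma_mono subset_rfl fun i => range_mono (hx i))
  have hpoch : poch a #(strings m \ strings x) = (-1) ^ (∑ i, x i) * poch a (∑ i, m i) /
      poch (1 - (∑ i, m i : ℕ) - a) (∑ i, x i) := by
    rw [eq_div_iff (poch_ne_zero_of_le (sum_le_sum fun i _ => hx i) hma), ← hsum,
      poch_mul_poch_one_sub]
  have hsign : (-1 : ℂ) ^ (∑ i, x i) * (-1) ^ (∑ i, x i) = 1 := by
    rw [← mul_pow, neg_one_mul, neg_neg, one_pow]
  have hnum : ∏ p ∈ strings x, (stringNode c p - a) = ∏ i, poch (c i - a) (x i) := by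
    simpa only [sub_eq_add_neg] using prod_strings_add c x (-a)
  have hden : ∏ i, poch (c i - a) (x i) / poch (1 + c i - d) (x i) =
      (∏ i, poch (c i - a) (x i)) / ∏ i, poch (1 + c i - d) (x i) := prod_div_distrib ..
  rw [splitWeight, prod_strings_prod_sdiff_eq_vandermonde hcc hcck hx, hnum,
    prod_strings_sdiff_one_add_sub hcd hx, hpoch, card_strings, kmTerm, hden]
  linear_combination (∏ i, poch (1 + c i - d) (m i)) * poch a (∑ i, m i) *
    ((∏ i, ∏ j ∈ Ioi i, (c i + x i - c j - x j) / (c i - c j)) *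
      (poch (b + 1 - d) (∑ i, x i) / poch (1 - (∑ i, m i : ℕ) - a) (∑ i, x i)) *
      ((∏ i, poch (c i - a) (x i)) / ∏ i, poch (1 + c i - d) (x i)) *
      ∏ i, ∏ k, poch (c i - c k - m k) (x i) / poch (1 + c i - c k) (x i)) * hsign

theorem hasSum_gaussTerm_mul_prod_poch (hconv : (a + (∑ i, m i : ℕ) + b - d).re < 0)
    (hd : ∀ k : ℕ, d + k ≠ 0) (hcc : ∀ i k, i ≠ k → c i ≠ c k)
    (hma : poch (1 - (∑ i, m i : ℕ) - a) (∑ i, m i) ≠ 0)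
    (hcd : ∀ i, poch (1 + c i - d) (m i) ≠ 0)
    (hcck : ∀ i k, poch (1 + c i - c k) (m i) ≠ 0) :
    HasSum (fun k : ℕ => gaussTerm a b d k * ∏ i, poch (c i + k) (m i))
      (gaussValue a b d / poch (1 + a + b - d) (∑ i, m i) *
        ((∏ i, poch (1 + c i - d) (m i)) * poch a (∑ i, m i) *
          ∑ x ∈ Fintype.piFinset fun i => range (m i + 1), kmTerm a b d c m x)) := by
  have hsum := hasSum_gaussTerm_mul_prod (b := b) hd (injOn_stringNode hcc hcck)
    (by rwa [card_strings])
  simp only [card_strings, nodeSum_strings, prod_strings_add] at hsum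
  have hweight := sum_congr rfl fun x (hx : x ∈ Fintype.piFinset fun i => range (m i + 1)) =>
    splitWeight_strings (b := b) hcc hma hcd hcck fun i =>
      mem_range_succ_iff.1 (Fintype.mem_piFinset.1 hx i)
  rwa [hweight, ← mul_sum] at hsum

end KarlssonMinton

theorem stmt11 (r : ℕ) (a b d : ℂ) (c : Fin r → ℂ) (m : Fin r → ℕ)
    (hconv : (a + (∑ i, m i : ℕ) + b - d).re < 0)
    (hd : ∀ k : ℕ, d + k ≠ 0)
    (hc : ∀ i, ∀ k : ℕ, c i + k ≠ 0)
    (hcc : ∀ i j : Fin r, i ≠ j → c i ≠ c j)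
    (hda : ∀ k : ℕ, d - a + k ≠ 0) (hdb : ∀ k : ℕ, d - b + k ≠ 0)
    (habd : poch (1 + a + b - d) (∑ i, m i) ≠ 0)
    (hma : poch (1 - (∑ i, m i : ℕ) - a) (∑ i, m i) ≠ 0)
    (hcd : ∀ i, poch (1 + c i - d) (m i) ≠ 0)
    (hcck : ∀ i k : Fin r, poch (1 + c i - c k) (m i) ≠ 0) :
    (∑' k : ℕ, poch a k * poch b k * (∏ i, poch (c i + m i) k) /
        ((k.factorial : ℂ) * poch d k * ∏ i, poch (c i) k)) =
      Complex.Gamma d * Complex.Gamma (d - a - b) /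
          (Complex.Gamma (d - a) * Complex.Gamma (d - b)) *
        (∏ i, poch (c i + 1 - d) (m i) / poch (c i) (m i)) *
        (poch a (∑ i, m i) / poch (1 + a + b - d) (∑ i, m i)) *
        ∑ x ∈ Fintype.piFinset (fun i => Finset.range (m i + 1)),
          (∏ i : Fin r, ∏ j ∈ Finset.univ.filter (fun j => i < j),
              (c i + x i - c j - x j) / (c i - c j)) *
            (poch (b + 1 - d) (∑ i, x i) /
              poch (1 - (∑ i, m i : ℕ) - a) (∑ i, x i)) *
            (∏ i : Fin r, poch (c i - a) (x i) / poch (1 + c i - d) (x i)) *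
            ∏ i : Fin r, ∏ k : Fin r,
              poch (c i - c k - m k) (x i) / poch (1 + c i - c k) (x i) := by
  have hsum := (hasSum_gaussTerm_mul_prod_poch hconv hd hcc hma hcd hcck).div_const
    (∏ i, poch (c i) (m i))
  have hterm : ∀ k : ℕ, poch a k * poch b k * (∏ i, poch (c i + m i) k) /
      ((k.factorial : ℂ) * poch d k * ∏ i, poch (c i) k) =
      gaussTerm a b d k * (∏ i, poch (c i + k) (m i)) / ∏ i, poch (c i) (m i) := fun k => by
    rw [← div_mul_div_comm, prod_poch_add_div_prod_poch m k fun i _ => hc i, ← mul_div_assoc,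
      gaussTerm]
  have hfactor : ∏ i, poch (c i + 1 - d) (m i) / poch (c i) (m i) =
      (∏ i, poch (1 + c i - d) (m i)) / ∏ i, poch (c i) (m i) := by
    simp only [prod_div_distrib, add_comm (1 : ℂ)]
  rw [tsum_congr hterm, hsum.tsum_eq, hfactor]
  simp only [kmTerm, filter_lt_eq_Ioi, gaussValue]
  ring
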